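/- In the Basilica group the commutator of a with b² is a pair with trivial first coordinate: as permutations of List Bool, a⁻¹ * b⁻¹ * b⁻¹ * a * b * b = pair 1 (b⁻¹ * a⁻¹ * b * a). -/

import Mathlib

namespace Basilica

mutual
  /-- Underlying map of the Basilica generator `a`. -/
  def aF : List Bool → List Bool
    | [] => []
    | false :: w => false :: w
    | true :: w => true :: bF w
  /-- Underlying map of the Basilica generator `b`. -/
  def bF : List Bool → List Bool
    | [] => []
    | false :: w => true :: w
    | true :: w => false :: aF w
end

mutual
  /-- Inverse of `aF`. -/
  def aI : List Bool → List Bool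
    | [] => []
    | false :: w => false :: w
    | true :: w => true :: bI w
  /-- Inverse of `bF`. -/
  def bI : List Bool → List Bool
    | [] => []
    | false :: w => true :: aI w
    | true :: w => false :: w
end

theorem basilica_inv : ∀ w : List Bool,
    aI (aF w) = w ∧ bI (bF w) = w ∧ aF (aI w) = w ∧ bF (bI w) = w := by
  intro w
  induction w with
  | nil => simp [aF, bF, aI, bI]
  | cons x w ih =>
    cases x <;>
      simp [aF, bF, aI, bI, ih.1, ih.2.1, ih.2.2.1, ih.2.2.2]

/-- The Basilica generator `a` as a permutation of the binary tree `List Bool`: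
`a [] = []`, `a (false :: w) = false :: w`, `a (true :: w) = true :: b w`. -/
def a : Equiv.Perm (List Bool) :=
  ⟨aF, aI, fun w => (basilica_inv w).1, fun w => (basilica_inv w).2.2.1⟩

/-- The Basilica generator `b` as a permutation of the binary tree `List Bool`:
`b [] = []`, `b (false :: w) = true :: w`, `b (true :: w) = false :: a w`. -/
def b : Equiv.Perm (List Bool) :=
  ⟨bF, bI, fun w => (basilica_inv w).2.1, fun w => (basilica_inv w).2.2.2⟩

/-- Underlying map of the pair `(g, h)` acting on the two subtrees. -/
def pairF (g h : List Bool → List Bool) : List Bool → List Bool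
  | [] => []
  | false :: w => false :: g w
  | true :: w => true :: h w

/-- The permutation of `List Bool` acting as `g` on the subtree below `false`
and as `h` on the subtree below `true`, fixing the root. -/
def pair (g h : Equiv.Perm (List Bool)) : Equiv.Perm (List Bool) :=
  ⟨pairF g h, pairF g.symm h.symm,
    fun w => by cases w with
      | nil => rfl
      | cons x w => cases x <;> simp [pairF],
    fun w => by cases w with
      | nil => rfl
      | cons x w => cases x <;> simp [pairF]⟩

/-- The Basilica group: the subgroup of `Equiv.Perm (List Bool)` generated by `a` and `b`. -/
def B : Subgroup (Equiv.Perm (List Bool)) := Subgroup.closure {a, b}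

end Basilica

namespace Basilica

theorem pair_mul_pair (g₁ h₁ g₂ h₂ : Equiv.Perm (List Bool)) :
    pair g₁ h₁ * pair g₂ h₂ = pair (g₁ * g₂) (h₁ * h₂) :=
  Equiv.ext fun
    | [] => rfl
    | false :: _ => rfl
    | true :: _ => rfl

theorem inv_pair (g h : Equiv.Perm (List Bool)) : (pair g h)⁻¹ = pair g⁻¹ h⁻¹ :=
  rfl

theorem a_eq_pair : a = pair 1 b :=
  Equiv.ext fun
    | [] => rfl
    | false :: _ => rfl
    | true :: _ => rfl

theorem b_mul_b_eq_pair : b * b = pair a a :=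
  Equiv.ext fun
    | [] => rfl
    | false :: _ => rfl
    | true :: _ => rfl

end Basilica

open Basilica in
/-- The commutator of `a` with `b²` is a pair with trivial first coordinate:
`[a, b²] = (1, [b, a])`. -/
theorem basilica_commutator_a_bsq :
    a⁻¹ * b⁻¹ * b⁻¹ * a * b * b = pair 1 (b⁻¹ * a⁻¹ * b * a) := by
  calc
    a⁻¹ * b⁻¹ * b⁻¹ * a * b * b = a⁻¹ * (b * b)⁻¹ * a * (b * b) := by
      simp only [mul_inv_rev, mul_assoc]
    _ = (pair 1 b)⁻¹ * (pair a a)⁻¹ * pair 1 b * pair a a := by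
      rw [b_mul_b_eq_pair, ← a_eq_pair]
    _ = pair (1⁻¹ * a⁻¹ * 1 * a) (b⁻¹ * a⁻¹ * b * a) := by
      simp only [inv_pair, pair_mul_pair]
    _ = pair 1 (b⁻¹ * a⁻¹ * b * a) := by
      rw [inv_one, one_mul, mul_one, inv_mul_cancel]
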